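/- arXiv:1207.0472 — 2 statements merged into one kernel-verified Lean document; each statement's English description precedes it below -/
import Mathlib

section
/- Let g be an n-Filippov algebra over K. There is a unique bilinear map ω₂^l : L_n(g) × D_n(g) → D_n(g) satisfying ω₂^l(a₁∧…∧a_{n−1}, b₁⊗…⊗b_{n−1}) = −Σ_{i=1}^{n−1} b₁⊗…⊗[b_i,a₁,…,a_{n−1}]⊗…⊗b_{n−1}, and together with the trivial right action ω₂^r = 0 it makes D_n(g) an anti-symmetric co-representation over the Leibniz algebra (L_n(g), ω̄₀); in particular ω₂^l(ω̄₀(ξ,η), β) = ω₂^l(ξ, ω₂^l(η,β)) − ω₂^l(η, ω₂^l(ξ,β)) for all ξ,η ∈ L_n(g) and β ∈ D_n(g). -/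
open scoped TensorProduct
open PiTensorProduct

/-- The pure wedge `a₁ ∧ … ∧ a_m` as an element of the `m`-th exterior power `⋀[K]^m g`. -/
noncomputable def wedge (K : Type) [Field K] {g : Type} [AddCommGroup g] [Module K g] {m : ℕ}
    (a : Fin m → g) : ⋀[K]^m g :=
  ⟨ExteriorAlgebra.ιMulti K m a, ExteriorAlgebra.ιMulti_range K m ⟨a, rfl⟩⟩

/-- `M` together with a left action `l` and a right action `r` is a co-representation of the
Leibniz algebra `(h, br)`. -/
def IsCorep {K : Type} [Field K] {h M : Type} [AddCommGroup h] [Module K h]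
    [AddCommGroup M] [Module K M] (br : h →ₗ[K] h →ₗ[K] h)
    (l : h →ₗ[K] M →ₗ[K] M) (r : M →ₗ[K] h →ₗ[K] M) : Prop :=
  (∀ (x y : h) (a : M), l (br x y) a = l x (l y a) - l y (l x a)) ∧
  (∀ (x y : h) (a : M), l y (r a x) = r (l y a) x - r a (br x y)) ∧
  (∀ (x y : h) (a : M), r (r a x) y = r a (br x y) - r (l y a) x)

/-!
The operators `ω₂ˡ(ξ, -)` are the diagonal extensions to the tensor power of the endomorphisms
`x ↦ -[x, ξ]` of `g`.  The fundamental identity says that `ξ ↦ -[-, ξ]` turns `ω̄₀` into the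
commutator of endomorphisms, and diagonal extension is a homomorphism of Lie algebras because
operators acting on different tensor factors commute.
-/

section DiagonalExtension

attribute [local instance] LieRing.ofAssociativeRing

variable {R ι : Type*} [CommRing R] [DecidableEq ι] {s : ι → Type*}
  [∀ i, AddCommGroup (s i)] [∀ i, Module R (s i)]

/-- The action on `⨂ j, s j` of an endomorphism of the `i`-th factor, the identity being applied
to all other factors. -/
noncomputable def factorEnd (i : ι) :
    Module.End R (s i) →ₐ[R] Module.End R (⨂[R] j, s j) :=
  AlgHom.ofLinearMap ((mapMultilinear R s s).toLinearMap 1 i)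
    (by
      rw [MultilinearMap.toLinearMap_apply, ← Pi.mulSingle, Pi.mulSingle_one]
      exact PiTensorProduct.map_one)
    (fun S T ↦ by
      simp only [MultilinearMap.toLinearMap_apply]
      rw [← Pi.mulSingle, ← Pi.mulSingle, ← Pi.mulSingle, Pi.mulSingle_mul]
      exact PiTensorProduct.map_mul _ _)

theorem factorEnd_tprod (i : ι) (T : Module.End R (s i)) (b : ∀ j, s j) :
    factorEnd i T (tprod R b) = tprod R (Function.update b i (T (b i))) := by
  have apply_tprod : factorEnd i T (tprod R b)
      = tprod R fun j ↦ (Pi.mulSingle i T : ∀ j, Module.End R (s j)) j (b j) := map_tprod _ b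
  rw [apply_tprod]
  congr 1
  funext j
  obtain rfl | hji := eq_or_ne j i
  · simp
  · simp [hji]

theorem commute_factorEnd {i j : ι} (hij : i ≠ j) (S : Module.End R (s i))
    (T : Module.End R (s j)) : Commute (factorEnd i S) (factorEnd j T) :=
  (Pi.mulSingle_commute (f := fun k ↦ Module.End R (s k)) hij S T).map mapMonoidHom

theorem lie_factorEnd (i : ι) (S T : Module.End R (s i)) :
    ⁅factorEnd i S, factorEnd i T⁆ = factorEnd i ⁅S, T⁆ := by
  simp only [Ring.lie_def, map_sub, map_mul]

variable [Fintype ι]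

theorem lie_sum_factorEnd (S T : ∀ i, Module.End R (s i)) :
    ⁅∑ i, factorEnd i (S i), ∑ i, factorEnd i (T i)⁆ = ∑ i, factorEnd i ⁅S i, T i⁆ := by
  rw [sum_lie_sum]
  refine Finset.sum_congr rfl fun i _ ↦ ?_
  rw [Finset.sum_eq_single_of_mem i (Finset.mem_univ i) fun j _ hji ↦
    commute_iff_lie_eq.mp (commute_factorEnd hji.symm (S i) (T j)), lie_factorEnd]

/-- The diagonal extension of a family of endomorphisms `T i` of the factors to `⨂ i, s i`, namely
`T₁ ⊗ 1 ⊗ ⋯ ⊗ 1 + ⋯ + 1 ⊗ ⋯ ⊗ 1 ⊗ Tₙ`. -/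
noncomputable def diagonalEnd :
    (∀ i, Module.End R (s i)) →ₗ⁅R⁆ Module.End R (⨂[R] i, s i) where
  toLinearMap := ∑ i, (factorEnd i).toLinearMap ∘ₗ LinearMap.proj i
  map_lie' {S T} := by
    simpa [LinearMap.sum_apply, LieRing.of_associative_ring_bracket] using
      (lie_sum_factorEnd S T).symm

theorem diagonalEnd_tprod (T : ∀ i, Module.End R (s i)) (b : ∀ i, s i) :
    diagonalEnd T (tprod R b) = ∑ i, tprod R (Function.update b i (T i (b i))) := by
  have apply_eq_sum : diagonalEnd T = ∑ i, factorEnd i (T i) := LinearMap.sum_apply ..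
  rw [apply_eq_sum, LinearMap.sum_apply]
  exact Finset.sum_congr rfl fun i _ ↦ factorEnd_tprod i (T i) b

end DiagonalExtension

section LeibnizBracket

attribute [local instance] LieRing.ofAssociativeRing

variable {R M : Type*} [CommRing R] [AddCommGroup M] [Module R M] {m : ℕ}

/-- The fundamental identity of a Leibniz `(m + 1)`-algebra whose bracket
`[x, a₁, …, aₘ] = br x a` is alternating in `a₁, …, aₘ`; the summand in which `x` is differentiated
is written separately. -/
def FundamentalIdentity (br : M →ₗ[R] M [⋀^Fin m]→ₗ[R] M) : Prop :=
  ∀ (x : M) (a b : Fin m → M),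
    br (br x a) b = br (br x b) a + ∑ i, br x (Function.update a i (br (a i) b))

theorem fundamentalIdentity_curryLeft (br : M [⋀^Fin (m + 1)]→ₗ[R] M)
    (fund : ∀ (x : Fin (m + 1) → M) (y : Fin m → M),
      br (Fin.cons (br x) y)
        = ∑ i, br (Function.update x i (br (Fin.cons (x i) y)))) :
    FundamentalIdentity br.curryLeft := by
  intro x a b
  have fund_cons := fund (Fin.cons x a) b
  simp only [Fin.sum_univ_succ, Fin.cons_zero, Fin.cons_succ, Fin.update_cons_zero,
    ← Fin.cons_update] at fund_cons
  exact fund_cons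

/-- The left action `ξ ↦ (x ↦ -[x, ξ])` of the exterior power on `M`; the sign makes it a left
rather than a right action. -/
noncomputable def wedgeAction (br : M →ₗ[R] M [⋀^Fin m]→ₗ[R] M) :
    ⋀[R]^m M →ₗ[R] Module.End R M :=
  -(exteriorPower.alternatingMapLinearEquiv.toLinearMap ∘ₗ br).flip

theorem wedgeAction_ιMulti (br : M →ₗ[R] M [⋀^Fin m]→ₗ[R] M) (a : Fin m → M) (x : M) :
    wedgeAction br (exteriorPower.ιMulti R m a) x = -br x a :=
  congrArg Neg.neg (exteriorPower.alternatingMapLinearEquiv_apply_ιMulti (br x) a)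

theorem wedgeAction_bracket {br : M →ₗ[R] M [⋀^Fin m]→ₗ[R] M} (hbr : FundamentalIdentity br)
    {ω : ⋀[R]^m M →ₗ[R] ⋀[R]^m M →ₗ[R] ⋀[R]^m M}
    (hω : ∀ a b : Fin m → M, ω (exteriorPower.ιMulti R m a) (exteriorPower.ιMulti R m b)
      = ∑ i, exteriorPower.ιMulti R m (Function.update a i (br (a i) b)))
    (ξ η : ⋀[R]^m M) :
    wedgeAction br (ω ξ η) = ⁅wedgeAction br ξ, wedgeAction br η⁆ := by
  let commutator := (LieModule.toEnd R (Module.End R M) (Module.End R M)).toLinearMap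
  suffices h : ω.compr₂ (wedgeAction br) =
      commutator.compl₁₂ (wedgeAction br) (wedgeAction br) from LinearMap.congr_fun₂ h ξ η
  ext a b x
  change wedgeAction br (ω (exteriorPower.ιMulti R m a) (exteriorPower.ιMulti R m b)) x =
    ⁅wedgeAction br (exteriorPower.ιMulti R m a), wedgeAction br (exteriorPower.ιMulti R m b)⁆ x
  simp only [hω, map_sum, LinearMap.sum_apply, Ring.lie_def, LinearMap.sub_apply,
    Module.End.mul_apply, wedgeAction_ιMulti, map_neg, neg_neg, hbr x a b,
    Finset.sum_neg_distrib]
  abel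

/-- The left action `ω₂ˡ` of the exterior power on a tensor power of `M`. -/
noncomputable def tensorPowerAction (ι : Type*) [Fintype ι] [DecidableEq ι]
    (br : M →ₗ[R] M [⋀^Fin m]→ₗ[R] M) :
    ⋀[R]^m M →ₗ[R] Module.End R (⨂[R] _ : ι, M) :=
  diagonalEnd.toLinearMap ∘ₗ LinearMap.pi fun _ : ι ↦ wedgeAction br

variable {ι : Type*} [Fintype ι] [DecidableEq ι]

theorem tensorPowerAction_ιMulti_tprod (br : M →ₗ[R] M [⋀^Fin m]→ₗ[R] M)
    (a : Fin m → M) (b : ι → M) :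
    tensorPowerAction ι br (exteriorPower.ιMulti R m a) (tprod R b)
      = -∑ i, tprod R (Function.update b i (br (b i) a)) := by
  refine (diagonalEnd_tprod _ b).trans ?_
  simp only [LinearMap.pi_apply, wedgeAction_ιMulti, MultilinearMap.map_update_neg,
    Finset.sum_neg_distrib]

theorem eq_tensorPowerAction {br : M →ₗ[R] M [⋀^Fin m]→ₗ[R] M}
    {f : ⋀[R]^m M →ₗ[R] Module.End R (⨂[R] _ : ι, M)}
    (hf : ∀ (a : Fin m → M) (b : ι → M), f (exteriorPower.ιMulti R m a) (tprod R b)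
      = -∑ i, tprod R (Function.update b i (br (b i) a))) :
    f = tensorPowerAction ι br := by
  ext a b
  exact (hf a b).trans (tensorPowerAction_ιMulti_tprod br a b).symm

theorem tensorPowerAction_bracket {br : M →ₗ[R] M [⋀^Fin m]→ₗ[R] M}
    (hbr : FundamentalIdentity br) {ω : ⋀[R]^m M →ₗ[R] ⋀[R]^m M →ₗ[R] ⋀[R]^m M}
    (hω : ∀ a b : Fin m → M, ω (exteriorPower.ιMulti R m a) (exteriorPower.ιMulti R m b)
      = ∑ i, exteriorPower.ιMulti R m (Function.update a i (br (a i) b)))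
    (ξ η : ⋀[R]^m M) :
    tensorPowerAction ι br (ω ξ η) = ⁅tensorPowerAction ι br ξ, tensorPowerAction ι br η⁆ :=
  calc diagonalEnd (fun _ : ι ↦ wedgeAction br (ω ξ η))
      = diagonalEnd ⁅fun _ : ι ↦ wedgeAction br ξ, fun _ : ι ↦ wedgeAction br η⁆ :=
        congrArg diagonalEnd (funext fun _ ↦ wedgeAction_bracket hbr hω ξ η)
    _ = ⁅diagonalEnd fun _ : ι ↦ wedgeAction br ξ, diagonalEnd fun _ : ι ↦ wedgeAction br η⁆ :=
        LieHom.map_lie _ _ _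

theorem statement2_general {br : M →ₗ[R] M [⋀^Fin m]→ₗ[R] M} (hbr : FundamentalIdentity br)
    {ω : ⋀[R]^m M →ₗ[R] ⋀[R]^m M →ₗ[R] ⋀[R]^m M}
    (hω : ∀ a b : Fin m → M, ω (exteriorPower.ιMulti R m a) (exteriorPower.ιMulti R m b)
      = ∑ i, exteriorPower.ιMulti R m (Function.update a i (br (a i) b))) :
    (∃! f : ⋀[R]^m M →ₗ[R] (⨂[R] _ : ι, M) →ₗ[R] (⨂[R] _ : ι, M),
      ∀ (a : Fin m → M) (b : ι → M), f (exteriorPower.ιMulti R m a) (tprod R b)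
        = -∑ i, tprod R (Function.update b i (br (b i) a))) ∧
    (∀ f : ⋀[R]^m M →ₗ[R] (⨂[R] _ : ι, M) →ₗ[R] (⨂[R] _ : ι, M),
      (∀ (a : Fin m → M) (b : ι → M), f (exteriorPower.ιMulti R m a) (tprod R b)
        = -∑ i, tprod R (Function.update b i (br (b i) a))) →
      ∀ (ξ η : ⋀[R]^m M) (β : ⨂[R] _ : ι, M), f (ω ξ η) β = f ξ (f η β) - f η (f ξ β)) := by
  refine ⟨⟨tensorPowerAction ι br, tensorPowerAction_ιMulti_tprod br,
    fun _ ↦ eq_tensorPowerAction⟩, fun f hf ξ η β ↦ ?_⟩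
  obtain rfl := eq_tensorPowerAction hf
  exact LinearMap.congr_fun (tensorPowerAction_bracket hbr hω ξ η) β

end LeibnizBracket

theorem isCorep_zero_right {K : Type} [Field K] {h M : Type} [AddCommGroup h] [Module K h]
    [AddCommGroup M] [Module K M] {br : h →ₗ[K] h →ₗ[K] h} {l : h →ₗ[K] M →ₗ[K] M}
    (hl : ∀ (x y : h) (a : M), l (br x y) a = l x (l y a) - l y (l x a)) :
    IsCorep br l 0 :=
  ⟨hl, by simp, by simp⟩

/-- Let `g` be an `n`-Filippov algebra over a field `K` of characteristic `≠ 2`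
(write `n = m + 1`, `n ≥ 2`).  There is a unique bilinear map `ω₂ˡ : Lₙ(g) × Dₙ(g) → Dₙ(g)`
satisfying `ω₂ˡ(a₁∧…∧a_{n-1}, b₁⊗…⊗b_{n-1}) = -Σᵢ b₁⊗…⊗[bᵢ,a₁,…,a_{n-1}]⊗…⊗b_{n-1}`, and
together with the trivial right action `ω₂ʳ = 0` it makes `Dₙ(g)` an anti-symmetric
co-representation over the Leibniz algebra `(Lₙ(g), ω̄₀)`; in particular
`ω₂ˡ(ω̄₀(ξ,η), β) = ω₂ˡ(ξ, ω₂ˡ(η,β)) - ω₂ˡ(η, ω₂ˡ(ξ,β))`. -/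
theorem statement2 (K : Type) [Field K] (hchar : ringChar K ≠ 2)
    (g : Type) [AddCommGroup g] [Module K g] (m : ℕ) (hm : 1 ≤ m)
    (br : MultilinearMap K (fun _ : Fin (m+1) => g) g)
    (fund : ∀ (x : Fin (m+1) → g) (y : Fin m → g),
      br (Fin.cons (br x) y)
        = ∑ i : Fin (m+1), br (Function.update x i (br (Fin.cons (x i) y))))
    (alt : ∀ (x : Fin (m+1) → g) (i j : Fin (m+1)), i ≠ j → x i = x j → br x = 0)
    -- the Leibniz bracket ω̄₀ on Lₙ(g)
    (ω₀bar : (⋀[K]^m g) →ₗ[K] (⋀[K]^m g) →ₗ[K] (⋀[K]^m g))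
    (hω₀bar : ∀ a b : Fin m → g,
      ω₀bar (wedge K a) (wedge K b)
        = ∑ i : Fin m, wedge K (Function.update a i (br (Fin.cons (a i) b)))) :
    (∃! f : (⋀[K]^m g) →ₗ[K] (⨂[K]^m g) →ₗ[K] (⨂[K]^m g),
      ∀ a b : Fin m → g,
        f (wedge K a) (tprod K b)
          = - ∑ i : Fin m, tprod K (Function.update b i (br (Fin.cons (b i) a)))) ∧
    (∀ f : (⋀[K]^m g) →ₗ[K] (⨂[K]^m g) →ₗ[K] (⨂[K]^m g),
      (∀ a b : Fin m → g,
        f (wedge K a) (tprod K b)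
          = - ∑ i : Fin m, tprod K (Function.update b i (br (Fin.cons (b i) a)))) →
      IsCorep ω₀bar f (0 : (⨂[K]^m g) →ₗ[K] (⋀[K]^m g) →ₗ[K] (⨂[K]^m g)) ∧
      (∀ (ξ η : ⋀[K]^m g) (β : ⨂[K]^m g),
        f (ω₀bar ξ η) β = f ξ (f η β) - f η (f ξ β))) := by
  obtain ⟨hf, hcorep⟩ := statement2_general (ι := Fin m) (fundamentalIdentity_curryLeft
    { br with map_eq_zero_of_eq' := fun x i j hx hij ↦ alt x i j hij hx } fund) hω₀bar
  exact ⟨hf, fun f hf ↦ ⟨isCorep_zero_right (hcorep f hf), hcorep f hf⟩⟩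
end

section
/- Let g be an n-Filippov algebra over K, π : D_n(g) → L_n(g) the canonical projection, and Γ_g := ker(π). For a tuple x = (x₁,…,x_{n−1}) ∈ g^{n−1} let δ_x : D_n(g) → D_n(g) and δ̄_x : L_n(g) → L_n(g) be the linear maps determined by δ_x(b₁⊗…⊗b_{n−1}) = Σ_i b₁⊗…⊗[b_i,x₁,…,x_{n−1}]⊗…⊗b_{n−1} and δ̄_x(b₁∧…∧b_{n−1}) = Σ_i b₁∧…∧[b_i,x₁,…,x_{n−1}]∧…∧b_{n−1}. Then π ∘ δ_x = δ̄_x ∘ π; in particular δ_x(Γ_g) ⊆ Γ_g, so that Γ_g is a co-representation of the Leibniz algebra L_n(g) under the restriction of the left action ω₂^l and the trivial right action. -/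
/-!
Let `m = n - 1` and `ad_y = [-, y₁, …, y_m]`. Separating the first summand of the fundamental
identity from the others turns it into `[ad_y, ad_a] = Σᵢ ad_{(a₁, …, ad_y aᵢ, …, a_m)}`. The map
`δ_y` is the extension of `ad_y` to a derivation of the tensor power, and this extension is a
homomorphism of Lie algebras because endomorphisms of different tensor factors commute. So `δ`
satisfies the same identity, and since `ω₂ˡ(a₁ ∧ … ∧ a_m, -) = -δ_a`, antisymmetry of the commutator
gives `ω₂ˡ(ω̄₀(a, y), -) = -[δ_y, δ_a] = [ω₂ˡ(a, -), ω₂ˡ(y, -)]`.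
-/

open scoped TensorProduct
open PiTensorProduct

attribute [local instance] LieRing.ofAssociativeRing

section TensorDerivation

variable {R : Type*} [CommRing R] {M : Type*} [AddCommGroup M] [Module R M]
  {ι : Type*} [DecidableEq ι]

/-- The action of `Module.End R M` on the `i`-th factor of `⨂[R] _ : ι, M`, which sends `f` to
`1 ⊗ ⋯ ⊗ f ⊗ ⋯ ⊗ 1`. -/
noncomputable def tensorFactorEnd (i : ι) :
    Module.End R M →ₐ[R] Module.End R (⨂[R] _ : ι, M) :=
  AlgHom.ofLinearMap ((mapMultilinear R (fun _ : ι => M) (fun _ => M)).toLinearMap 1 i)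
    ((mapMonoidHom.comp (MonoidHom.mulSingle (fun _ : ι => Module.End R M) i)).map_one)
    ((mapMonoidHom.comp (MonoidHom.mulSingle (fun _ : ι => Module.End R M) i)).map_mul)

theorem tensorFactorEnd_tprod (i : ι) (f : Module.End R M) (b : ι → M) :
    tensorFactorEnd i f (tprod R b) = tprod R (Function.update b i (f (b i))) := by
  refine (map_tprod _ b).trans (congrArg (PiTensorProduct.tprod R) (funext fun j => ?_))
  obtain rfl | hj := eq_or_ne j i <;> simp [*]

theorem commute_tensorFactorEnd {i j : ι} (hij : i ≠ j) (f h : Module.End R M) :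
    Commute (tensorFactorEnd i f) (tensorFactorEnd j h) :=
  (Pi.mulSingle_commute (f := fun _ : ι => Module.End R M) hij f h).map
    (mapMonoidHom (R := R) (s := fun _ : ι => M))

theorem sum_lie_tensorFactorEnd [Fintype ι] (i : ι) (f h : Module.End R M) :
    ∑ j, ⁅tensorFactorEnd i f, tensorFactorEnd j h⁆ = tensorFactorEnd i ⁅f, h⁆ := by
  rw [Finset.sum_eq_single i (fun j _ hj => (commute_tensorFactorEnd hj.symm f h).lie_eq)
    (by simp)]
  exact ((tensorFactorEnd i).toLieHom.map_lie f h).symm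

/-- The extension of an endomorphism `f` of `M` to a derivation of the tensor power
`⨂[R] _ : ι, M`, bundled as a Lie algebra homomorphism in `f`. -/
noncomputable def tensorDerivation [Fintype ι] :
    Module.End R M →ₗ⁅R⁆ Module.End R (⨂[R] _ : ι, M) where
  toLinearMap := ∑ i, (tensorFactorEnd i).toLinearMap
  map_lie' {f h} := by simp [sum_lie_sum, sum_lie_tensorFactorEnd]

theorem tensorDerivation_apply [Fintype ι] (f : Module.End R M) :
    tensorDerivation f = ∑ i : ι, tensorFactorEnd i f :=
  LinearMap.sum_apply _ _ _

theorem tensorDerivation_tprod [Fintype ι] (f : Module.End R M) (b : ι → M) :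
    tensorDerivation f (tprod R b) = ∑ i, tprod R (Function.update b i (f (b i))) := by
  simp only [tensorDerivation_apply, LinearMap.sum_apply, tensorFactorEnd_tprod]

theorem eq_tensorDerivation [Fintype ι] {f : Module.End R M} {D : Module.End R (⨂[R] _ : ι, M)}
    (hD : ∀ b, D (tprod R b) = ∑ i, tprod R (Function.update b i (f (b i)))) :
    D = tensorDerivation f :=
  PiTensorProduct.ext (MultilinearMap.ext fun b => (hD b).trans (tensorDerivation_tprod f b).symm)

end TensorDerivation

section LeibnizBracket

open exteriorPower (ιMulti)

variable {R : Type*} [CommRing R] {g : Type*} [AddCommGroup g] [Module R g] {m : ℕ}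

/-- The fundamental identity, which makes `g` a Leibniz `n`-algebra with `n = m + 1`: bracketing
with `y₁, …, y_m` on the right is a derivation of the `n`-ary bracket. -/
def IsLeibnizBracket (br : MultilinearMap R (fun _ : Fin (m + 1) => g) g) : Prop :=
  ∀ (x : Fin (m + 1) → g) (y : Fin m → g),
    br (Fin.cons (br x) y) = ∑ i, br (Function.update x i (br (Fin.cons (x i) y)))

/-- The right adjoint map `[-, y₁, …, y_m]` of an `(m + 1)`-ary bracket, multilinear in `y`. -/
def rightAdjoint (br : MultilinearMap R (fun _ : Fin (m + 1) => g) g) :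
    MultilinearMap R (fun _ : Fin m => g) (Module.End R g) where
  toFun y :=
    { toFun := fun z => br.curryLeft z y
      map_add' := by simp
      map_smul' := by simp }
  map_update_add' y i u v := by ext z; exact (br.curryLeft z).map_update_add y i u v
  map_update_smul' y i c u := by ext z; exact (br.curryLeft z).map_update_smul y i c u

theorem rightAdjoint_apply (br : MultilinearMap R (fun _ : Fin (m + 1) => g) g)
    (y : Fin m → g) (z : g) : rightAdjoint br y z = br (Fin.cons z y) :=
  rfl

theorem IsLeibnizBracket.lie_rightAdjoint
    {br : MultilinearMap R (fun _ : Fin (m + 1) => g) g} (hbr : IsLeibnizBracket br)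
    (y a : Fin m → g) :
    ⁅rightAdjoint br y, rightAdjoint br a⁆ =
      ∑ i, rightAdjoint br (Function.update a i (rightAdjoint br y (a i))) := by
  ext z
  have hfund := hbr (Fin.cons z a) y
  simp only [Fin.sum_univ_succ, Fin.cons_zero, Fin.cons_succ, Fin.update_cons_zero,
    ← Fin.cons_update] at hfund
  simp only [LieRing.of_associative_ring_bracket, LinearMap.sub_apply, Module.End.mul_apply,
    LinearMap.sum_apply, rightAdjoint_apply]
  rw [hfund, add_sub_cancel_left]

theorem IsLeibnizBracket.map_exteriorPower_bracket
    {br : MultilinearMap R (fun _ : Fin (m + 1) => g) g} (hbr : IsLeibnizBracket br)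
    {ω₀ : ⋀[R]^m g →ₗ[R] ⋀[R]^m g →ₗ[R] ⋀[R]^m g}
    (hω₀ : ∀ a b : Fin m → g, ω₀ (ιMulti R m a) (ιMulti R m b) =
      ∑ i, ιMulti R m (Function.update a i (rightAdjoint br b (a i))))
    {A : Type*} [LieRing A] [LieAlgebra R A] (ρ : Module.End R g →ₗ⁅R⁆ A)
    {ω : ⋀[R]^m g →ₗ[R] A}
    (hω : ∀ a : Fin m → g, ω (ιMulti R m a) = -ρ (rightAdjoint br a))
    (ξ η : ⋀[R]^m g) : ω (ω₀ ξ η) = ⁅ω ξ, ω η⁆ := by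
  suffices ω₀.compr₂ ω = (LieAlgebra.ad R A : A →ₗ[R] Module.End R A).compl₁₂ ω ω from
    LinearMap.congr_fun₂ this ξ η
  ext a b
  calc ω (ω₀ (ιMulti R m a) (ιMulti R m b))
      = -ρ (∑ i, rightAdjoint br (Function.update a i (rightAdjoint br b (a i)))) := by
        simp only [hω₀, map_sum, hω, Finset.sum_neg_distrib]
    _ = -⁅ρ (rightAdjoint br b), ρ (rightAdjoint br a)⁆ := by
        rw [← hbr.lie_rightAdjoint, LieHom.map_lie]
    _ = ⁅ω (ιMulti R m a), ω (ιMulti R m b)⁆ := by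
        rw [lie_skew, hω, hω, neg_lie, lie_neg, neg_neg]

theorem exteriorPower_apply_mem_of_ιMulti {V : Type*} [AddCommGroup V] [Module R V]
    {ω : ⋀[R]^m g →ₗ[R] Module.End R V} {N : Submodule R V} {v : V}
    (h : ∀ a, ω (ιMulti R m a) v ∈ N) (ξ : ⋀[R]^m g) : ω ξ v ∈ N := by
  have hzero : N.mkQ ∘ₗ ω.flip v = 0 := by
    ext a
    exact (Submodule.Quotient.mk_eq_zero N).2 (h a)
  exact (Submodule.Quotient.mk_eq_zero N).1 (LinearMap.congr_fun hzero ξ)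

theorem statement10_general
    (br : MultilinearMap R (fun _ : Fin (m + 1) => g) g) (hbr : IsLeibnizBracket br)
    (π : ⨂[R]^m g →ₗ[R] ⋀[R]^m g)
    (hπ : ∀ a : Fin m → g, π (tprod R a) = ιMulti R m a)
    (δ : (Fin m → g) → Module.End R (⨂[R]^m g))
    (hδ : ∀ x b : Fin m → g,
      δ x (tprod R b) = ∑ i, tprod R (Function.update b i (br (Fin.cons (b i) x))))
    (δbar : (Fin m → g) → Module.End R (⋀[R]^m g))
    (hδbar : ∀ x b : Fin m → g, δbar x (ιMulti R m b) =
      ∑ i, ιMulti R m (Function.update b i (br (Fin.cons (b i) x))))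
    (ω₀bar : ⋀[R]^m g →ₗ[R] ⋀[R]^m g →ₗ[R] ⋀[R]^m g)
    (hω₀bar : ∀ a b : Fin m → g,
      ω₀bar (ιMulti R m a) (ιMulti R m b) =
        ∑ i, ιMulti R m (Function.update a i (br (Fin.cons (a i) b))))
    (ω₂l : ⋀[R]^m g →ₗ[R] Module.End R (⨂[R]^m g))
    (hω₂l : ∀ a b : Fin m → g, ω₂l (ιMulti R m a) (tprod R b) =
      -∑ i, tprod R (Function.update b i (br (Fin.cons (b i) a)))) :
    (∀ x, π ∘ₗ δ x = δbar x ∘ₗ π) ∧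
    (∀ x, ∀ v ∈ LinearMap.ker π, δ x v ∈ LinearMap.ker π) ∧
    (∀ ξ, ∀ v ∈ LinearMap.ker π, ω₂l ξ v ∈ LinearMap.ker π) ∧
    ∀ ξ η, ω₂l (ω₀bar ξ η) = ⁅ω₂l ξ, ω₂l η⁆ := by
  have hcomm (x) : π ∘ₗ δ x = δbar x ∘ₗ π :=
    PiTensorProduct.ext <| MultilinearMap.ext fun b => by
      simp only [LinearMap.compMultilinearMap_apply, LinearMap.comp_apply, hδ, hπ, hδbar, map_sum]
  have hδker (x) (v) (hv : v ∈ LinearMap.ker π) : δ x v ∈ LinearMap.ker π := by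
    rw [LinearMap.mem_ker, ← LinearMap.comp_apply, hcomm, LinearMap.comp_apply,
      LinearMap.mem_ker.1 hv, map_zero]
  have hω₂l_eq_neg_δ (a) : ω₂l (ιMulti R m a) = -δ a :=
    PiTensorProduct.ext <| MultilinearMap.ext fun b => by
      simp only [LinearMap.compMultilinearMap_apply, LinearMap.neg_apply, hω₂l, hδ]
  have hδ_eq (x) : δ x = tensorDerivation (rightAdjoint br x) := eq_tensorDerivation (hδ x)
  refine ⟨hcomm, hδker, fun ξ v hv => ?_, fun ξ η => ?_⟩
  · refine exteriorPower_apply_mem_of_ιMulti (fun a => ?_) ξ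
    rw [hω₂l_eq_neg_δ]
    exact neg_mem (hδker a v hv)
  · exact hbr.map_exteriorPower_bracket hω₀bar tensorDerivation
      (fun a => (hω₂l_eq_neg_δ a).trans (congrArg Neg.neg (hδ_eq a))) ξ η

end LeibnizBracket

/-- Let `g` be an `n`-Filippov algebra over a field `K` of characteristic
`≠ 2` (write `n = m + 1`, `n ≥ 2`), `π : Dₙ(g) → Lₙ(g)` the canonical projection and
`Γ_g := ker π`.  For a tuple `x ∈ g^{n-1}` let `δ_x` and `δ̄_x` be the linear maps determined
by `δ_x(b₁⊗…⊗b_{n-1}) = Σᵢ b₁⊗…⊗[bᵢ,x₁,…,x_{n-1}]⊗…⊗b_{n-1}` and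
`δ̄_x(b₁∧…∧b_{n-1}) = Σᵢ b₁∧…∧[bᵢ,x₁,…,x_{n-1}]∧…∧b_{n-1}`.  Then `π ∘ δ_x = δ̄_x ∘ π`;
in particular `δ_x(Γ_g) ⊆ Γ_g`, so that `Γ_g` is a co-representation of the Leibniz algebra
`(Lₙ(g), ω̄₀)` under the restriction of the left action `ω₂ˡ` and the trivial right action. -/
theorem statement10 (K : Type) [Field K] (hchar : ringChar K ≠ 2)
    (g : Type) [AddCommGroup g] [Module K g] (m : ℕ) (hm : 1 ≤ m)
    (br : MultilinearMap K (fun _ : Fin (m+1) => g) g)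
    (fund : ∀ (x : Fin (m+1) → g) (y : Fin m → g),
      br (Fin.cons (br x) y)
        = ∑ i : Fin (m+1), br (Function.update x i (br (Fin.cons (x i) y))))
    (alt : ∀ (x : Fin (m+1) → g) (i j : Fin (m+1)), i ≠ j → x i = x j → br x = 0)
    -- the canonical projection π : Dₙ(g) → Lₙ(g)
    (π : (⨂[K]^m g) →ₗ[K] ⋀[K]^m g)
    (hπ : ∀ a : Fin m → g, π (tprod K a) = wedge K a)
    -- the maps δ_x and δ̄_x
    (δ : (Fin m → g) → ((⨂[K]^m g) →ₗ[K] (⨂[K]^m g)))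
    (hδ : ∀ (x : Fin m → g) (b : Fin m → g),
      δ x (tprod K b)
        = ∑ i : Fin m, tprod K (Function.update b i (br (Fin.cons (b i) x))))
    (δbar : (Fin m → g) → ((⋀[K]^m g) →ₗ[K] (⋀[K]^m g)))
    (hδbar : ∀ (x : Fin m → g) (b : Fin m → g),
      δbar x (wedge K b)
        = ∑ i : Fin m, wedge K (Function.update b i (br (Fin.cons (b i) x))))
    -- the Leibniz bracket ω̄₀ on Lₙ(g)
    (ω₀bar : (⋀[K]^m g) →ₗ[K] (⋀[K]^m g) →ₗ[K] (⋀[K]^m g))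
    (hω₀bar : ∀ a b : Fin m → g,
      ω₀bar (wedge K a) (wedge K b)
        = ∑ i : Fin m, wedge K (Function.update a i (br (Fin.cons (a i) b))))
    -- the left action ω₂ˡ of Lₙ(g) on Dₙ(g)
    (ω₂l : (⋀[K]^m g) →ₗ[K] (⨂[K]^m g) →ₗ[K] (⨂[K]^m g))
    (hω₂l : ∀ a b : Fin m → g,
      ω₂l (wedge K a) (tprod K b)
        = - ∑ i : Fin m, tprod K (Function.update b i (br (Fin.cons (b i) a)))) :
    -- `π ∘ δ_x = δ̄_x ∘ π`
    (∀ x : Fin m → g, π ∘ₗ δ x = (δbar x) ∘ₗ π) ∧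
    -- in particular `δ_x(Γ_g) ⊆ Γ_g` …
    (∀ (x : Fin m → g) (v : ⨂[K]^m g), v ∈ LinearMap.ker π → δ x v ∈ LinearMap.ker π) ∧
    -- … and `ω₂ˡ` preserves `Γ_g`, …
    (∀ (ξ : ⋀[K]^m g) (v : ⨂[K]^m g), v ∈ LinearMap.ker π → ω₂l ξ v ∈ LinearMap.ker π) ∧
    -- … so `Γ_g`, with left action the restriction of `ω₂ˡ` and trivial right action, is a
    -- co-representation of `(Lₙ(g), ω̄₀)` (the remaining two axioms hold trivially since the
    -- right action is zero)
    (∀ (ξ η : ⋀[K]^m g) (v : ⨂[K]^m g), v ∈ LinearMap.ker π →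
      ω₂l (ω₀bar ξ η) v = ω₂l ξ (ω₂l η v) - ω₂l η (ω₂l ξ v)) := by
  obtain ⟨hcomm, hδker, hωker, hlie⟩ :=
    statement10_general br fund π hπ δ hδ δbar hδbar ω₀bar hω₀bar ω₂l hω₂l
  exact ⟨hcomm, hδker, hωker, fun ξ η v _ => LinearMap.congr_fun (hlie ξ η) v⟩
end
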